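/- (Nonlocal C¹ implicit function theorem) Let F ∈ C(T×D_X×D_Y, Z) have continuous partial Fréchet derivatives in x and y on T×D_X×D_Y. Suppose there exist open M_X ⊆ D_X and M_Y ⊆ D_Y such that for each (t,x) ∈ T×M_X there is a unique y ∈ M_Y with F(t,x,y)=0, and at each solution point (t',x',y') the derivative ∂_y F(t',x',y') ∈ L(Y,Z) has a bounded inverse. Then F(t,x,y)=0 has a unique solution y = η(t,x) for each (t,x) ∈ T×M_X, and η ∈ C(T×M_X, M_Y) is continuously differentiable with respect to x. -/

import Mathlib

open Filter Topology

/-- Nonlocal C¹ implicit function theorem: if `F ∈ C(T × D_X × D_Y, Z)` has continuous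
partial Fréchet derivatives in `x` and `y`, for each `(t,x) ∈ T × M_X` there is a unique
`y ∈ M_Y` with `F(t,x,y) = 0`, and at each solution point `∂_y F` has a bounded inverse,
then `F(t,x,y) = 0` has a unique solution `y = η(t,x)` on `T × M_X`; the function `η` is
continuous and continuously differentiable with respect to `x`. -/
theorem stmt_10
    {X Y Z : Type*} [NormedAddCommGroup X] [NormedSpace ℝ X] [CompleteSpace X]
    [NormedAddCommGroup Y] [NormedSpace ℝ Y] [CompleteSpace Y]
    [NormedAddCommGroup Z] [NormedSpace ℝ Z] [CompleteSpace Z]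
    (T : Set ℝ) (hT : T.OrdConnected)
    (DX : Set X) (DY : Set Y) (hDX : IsOpen DX) (hDY : IsOpen DY)
    (MX : Set X) (MY : Set Y) (hMXopen : IsOpen MX) (hMYopen : IsOpen MY)
    (hMX : MX ⊆ DX) (hMY : MY ⊆ DY)
    (F : ℝ → X → Y → Z)
    (hFcont : ContinuousOn (fun p : ℝ × X × Y => F p.1 p.2.1 p.2.2) (T ×ˢ DX ×ˢ DY))
    -- continuous partial derivatives of `F` in `x` and `y` on `T × D_X × D_Y`
    (Fx : ℝ → X → Y → (X →L[ℝ] Z)) (Fy : ℝ → X → Y → (Y →L[ℝ] Z))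
    (hFx : ∀ t ∈ T, ∀ x ∈ DX, ∀ y ∈ DY, HasFDerivAt (fun x'' => F t x'' y) (Fx t x y) x)
    (hFy : ∀ t ∈ T, ∀ x ∈ DX, ∀ y ∈ DY, HasFDerivAt (fun y'' => F t x y'') (Fy t x y) y)
    (hFxcont : ContinuousOn (fun p : ℝ × X × Y => Fx p.1 p.2.1 p.2.2) (T ×ˢ DX ×ˢ DY))
    (hFycont : ContinuousOn (fun p : ℝ × X × Y => Fy p.1 p.2.1 p.2.2) (T ×ˢ DX ×ˢ DY))
    -- condition 1: existence and uniqueness of `y ∈ M_Y` for each `(t, x) ∈ T × M_X`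
    (hexun : ∀ t ∈ T, ∀ x ∈ MX, ∃! y, y ∈ MY ∧ F t x y = 0)
    -- condition 2: at each solution point, `∂_y F` has a bounded inverse
    (hinv : ∀ t ∈ T, ∀ x ∈ MX, ∀ y ∈ MY, F t x y = 0 →
        ∃ Winv : Z →L[ℝ] Y, (∀ v, Winv (Fy t x y v) = v) ∧ (∀ z, Fy t x y (Winv z) = z)) :
    ∃ η : ℝ → X → Y,
      (∀ t ∈ T, ∀ x ∈ MX, η t x ∈ MY ∧ F t x (η t x) = 0) ∧
      (∀ t ∈ T, ∀ x ∈ MX, ∀ y ∈ MY, F t x y = 0 → y = η t x) ∧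
      ContinuousOn (fun p : ℝ × X => η p.1 p.2) (T ×ˢ MX) ∧
      -- `η` is continuously differentiable with respect to `x` on `T × M_X`
      ∃ Dη : ℝ → X → (X →L[ℝ] Y),
        (∀ t ∈ T, ∀ x ∈ MX, HasFDerivAt (fun x'' => η t x'') (Dη t x) x) ∧
        (∀ t ∈ T, ContinuousOn (Dη t) MX) := by
  classical
  have hex : ∀ t x, ∃ y, t ∈ T → x ∈ MX → y ∈ MY ∧ F t x y = 0 := by
    intro t x
    by_cases h : t ∈ T ∧ x ∈ MX
    · obtain ⟨y, hy, -⟩ := hexun t h.1 x h.2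
      exact ⟨y, fun _ _ => hy⟩
    · exact ⟨0, fun h1 h2 => absurd ⟨h1, h2⟩ h⟩
  choose η hη using hex
  have hsol : ∀ t ∈ T, ∀ x ∈ MX, η t x ∈ MY ∧ F t x (η t x) = 0 :=
    fun t ht x hx => hη t x ht hx
  have huniq : ∀ t ∈ T, ∀ x ∈ MX, ∀ y ∈ MY, F t x y = 0 → y = η t x :=
    fun t ht x hx y hy h => (hexun t ht x hx).unique ⟨hy, h⟩ (hsol t ht x hx)
  have hcont : ContinuousOn (fun p : ℝ × X => η p.1 p.2) (T ×ˢ MX) := by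
    rintro ⟨t0, x0⟩ ⟨ht0, hx0⟩
    dsimp only at ht0 hx0
    obtain ⟨hy0, hF0⟩ := hsol t0 ht0 x0 hx0
    obtain ⟨W, -, hW⟩ := hinv t0 ht0 x0 hx0 _ hy0 hF0
    rw [Metric.continuousWithinAt_iff']
    intro ε hε
    dsimp only
    set y0 := η t0 x0 with hy0def
    let R : (Fy t0 x0 y0).NonlinearRightInverse :=
      { toFun := W
        nnnorm := ‖W‖₊ + 1
        bound' := fun z => (W.le_opNorm z).trans (by
          push_cast
          gcongr
          linarith)
        right_inv' := hW }
    have hRpos : 0 < R.nnnorm := by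
      change 0 < ‖W‖₊ + 1
      positivity
    set c : NNReal := R.nnnorm⁻¹ / 2 with hc
    have hcpos : 0 < (c : ℝ) := by
      have : 0 < c := by positivity
      exact_mod_cast this
    have hRc : ((R.nnnorm : ℝ)⁻¹ - c) = c := by
      rw [hc]
      push_cast
      ring
    have hmem0 : ((t0, x0, y0) : ℝ × X × Y) ∈ T ×ˢ DX ×ˢ DY :=
      ⟨ht0, hMX hx0, hMY hy0⟩
    obtain ⟨δ, hδ, hFyδ⟩ := Metric.continuousWithinAt_iff.1 (hFycont _ hmem0) c hcpos
    obtain ⟨ρ, hρ, hρMY⟩ := Metric.isOpen_iff.1 hMYopen y0 hy0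
    obtain ⟨r, hr, hrε, hrδ, hrρ⟩ : ∃ r : ℝ, 0 < r ∧ r < ε ∧ r < δ ∧ r < ρ := by
      refine ⟨min ε (min δ ρ) / 2, by positivity, ?_, ?_, ?_⟩
      · linarith [min_le_left ε (min δ ρ)]
      · have := (min_le_right ε (min δ ρ)).trans (min_le_left δ ρ)
        linarith
      · have := (min_le_right ε (min δ ρ)).trans (min_le_right δ ρ)
        linarith
    have hball : Metric.closedBall y0 r ⊆ MY :=
      (Metric.closedBall_subset_ball hrρ).trans hρMY
    have hFc : ContinuousWithinAt (fun p : ℝ × X => F p.1 p.2 y0) (T ×ˢ MX) (t0, x0) := by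
      have h1 : ContinuousOn (fun p : ℝ × X => F p.1 p.2 y0) (T ×ˢ MX) :=
        hFcont.comp (f := fun p : ℝ × X => ((p.1, p.2, y0) : ℝ × X × Y))
          (by fun_prop) (fun p hp => ⟨hp.1, hMX hp.2, hMY hy0⟩)
      exact h1 _ ⟨ht0, hx0⟩
    have hcr : 0 < (c : ℝ) * r := by positivity
    filter_upwards [Metric.continuousWithinAt_iff'.1 hFc _ hcr, self_mem_nhdsWithin,
      mem_nhdsWithin_of_mem_nhds (Metric.ball_mem_nhds (t0, x0) hδ)]
    rintro ⟨t, x⟩ h1 ⟨ht, hx⟩ h2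
    dsimp only at h1 ht hx ⊢
    rw [Metric.mem_ball] at h2
    have happ : ApproximatesLinearOn (F t x) (Fy t0 x0 y0) (Metric.closedBall y0 r) c := by
      intro a ha b hb
      refine (convex_closedBall y0 r).norm_image_sub_le_of_norm_hasFDerivWithin_le'
        (f' := fun y => Fy t x y) (fun y hy => ?_) (fun y hy => ?_) hb ha
      · exact (hFy t ht x (hMX hx) y (hMY (hball hy))).hasFDerivWithinAt
      · rw [← dist_eq_norm]
        refine (@hFyδ (t, x, y) ⟨ht, hMX hx, hMY (hball hy)⟩ ?_).le
        rw [Prod.dist_eq, max_lt_iff] at h2 ⊢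
        refine ⟨h2.1, ?_⟩
        rw [Prod.dist_eq, max_lt_iff]
        exact ⟨h2.2, (Metric.mem_closedBall.1 hy).trans_lt hrδ⟩
    obtain ⟨y, hy, hFy0⟩ := happ.surjOn_closedBall_of_nonlinearRightInverse R hr.le subset_rfl
      (show (0 : Z) ∈ _ by
        rw [Metric.mem_closedBall, hRc, dist_comm]
        rw [hF0] at h1
        exact h1.le)
    rw [← huniq t ht x hx y (hball hy) hFy0]
    exact (Metric.mem_closedBall.1 hy).trans_lt hrε
  have hIsInv : ∀ t ∈ T, ∀ x ∈ MX, (Fy t x (η t x)).IsInvertible := by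
    intro t ht x hx
    obtain ⟨hy, hF⟩ := hsol t ht x hx
    obtain ⟨W, hW1, hW2⟩ := hinv t ht x hx _ hy hF
    exact ContinuousLinearMap.IsInvertible.of_inverse (g := W)
      (ContinuousLinearMap.ext hW2) (ContinuousLinearMap.ext hW1)
  have hηt : ∀ t ∈ T, ContinuousOn (η t) MX := fun t ht =>
    hcont.comp (f := fun x : X => ((t, x) : ℝ × X)) (by fun_prop) (fun x hx => ⟨ht, hx⟩)
  have hmaps : ∀ t ∈ T, Set.MapsTo (fun x : X => ((t, x, η t x) : ℝ × X × Y)) MX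
      (T ×ˢ DX ×ˢ DY) :=
    fun t ht x hx => ⟨ht, hMX hx, hMY (hsol t ht x hx).1⟩
  have hgraph : ∀ t ∈ T, ContinuousOn (fun x : X => ((t, x, η t x) : ℝ × X × Y)) MX :=
    fun t ht => continuousOn_const.prodMk (continuousOn_id.prodMk (hηt t ht))
  refine ⟨η, hsol, huniq, hcont,
    fun t x => -(Fy t x (η t x)).inverse ∘L Fx t x (η t x), ?_, ?_⟩
  · intro t ht x hx
    obtain ⟨hy, hF⟩ := hsol t ht x hx
    have hnhds : DX ×ˢ DY ∈ 𝓝 ((x, η t x) : X × Y) :=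
      (hDX.prod hDY).mem_nhds ⟨hMX hx, hMY hy⟩
    have hincl : ContinuousOn (fun v : X × Y => ((t, v.1, v.2) : ℝ × X × Y)) (DX ×ˢ DY) := by
      fun_prop
    have df₁ : ∀ᶠ v in 𝓝 ((x, η t x) : X × Y),
        HasFDerivAt (F t · v.2) (Fx t v.1 v.2) v.1 := by
      filter_upwards [hnhds] with v hv using hFx t ht _ hv.1 _ hv.2
    have df₂ : ∀ᶠ v in 𝓝 ((x, η t x) : X × Y),
        HasFDerivAt (F t v.1 ·) (Fy t v.1 v.2) v.2 := by
      filter_upwards [hnhds] with v hv using hFy t ht _ hv.1 _ hv.2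
    have cf₁ : ContinuousAt (fun v : X × Y => Fx t v.1 v.2) (x, η t x) :=
      (hFxcont.comp hincl (fun v hv => ⟨ht, hv⟩)).continuousAt hnhds
    have cf₂ : ContinuousAt (fun v : X × Y => Fy t v.1 v.2) (x, η t x) :=
      (hFycont.comp hincl (fun v hv => ⟨ht, hv⟩)).continuousAt hnhds
    have hi := hIsInv t ht x hx
    refine (hasStrictFDerivAt_implicitFunctionOfBivariate (u := (x, η t x))
      df₁ df₂ cf₁ cf₂ hi).hasFDerivAt.congr_of_eventuallyEq ?_
    have htend := tendsto_implicitFunctionOfBivariate (u := (x, η t x)) df₁ df₂ cf₁ cf₂ hi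
    filter_upwards [eventually_apply_implicitFunctionOfBivariate (u := (x, η t x))
      df₁ df₂ cf₁ cf₂ hi, htend.eventually (hMYopen.mem_nhds hy), hMXopen.mem_nhds hx]
      with x' h1 h2 h3
    exact (huniq t ht x' h3 _ h2 (h1.trans hF)).symm
  · intro t ht x hx
    have c1 : ContinuousWithinAt (fun x => Fx t x (η t x)) MX x :=
      (hFxcont.comp (hgraph t ht) (hmaps t ht)) x hx
    have c2 : ContinuousWithinAt (fun x => Fy t x (η t x)) MX x :=
      (hFycont.comp (hgraph t ht) (hmaps t ht)) x hx
    have c3 : ContinuousAt ContinuousLinearMap.inverse (Fy t x (η t x)) := by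
      obtain ⟨e, he⟩ := hIsInv t ht x hx
      rw [← he]
      exact (contDiffAt_map_inverse (n := 0) e).continuousAt
    have c4 : ContinuousWithinAt (fun x => (Fy t x (η t x)).inverse) MX x :=
      ContinuousAt.comp_continuousWithinAt (f := fun x => Fy t x (η t x)) (x := x) c3 c2
    exact c4.neg.clm_comp c1
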